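/- For every integer m with 1 ≤ m ≤ n there is an isomorphism of 𝔽₂-algebras P^τ/(ε̄₁^m) ≅ 𝔽₂[e₁, …, e_s, x]/(e₁^m, e₁·x, x², h₂, h₃, …, h_s), where (ε̄₁^m) denotes the ideal of P^τ generated by ε̄₁^m, h₂ = e₁^{2^{k₂}−n}·x + Σ_{j=0}^{k₂−1} e₁^{2^{k₂}−2^{j+1}}·e₂^{2^j}, and h_i = e_i^{2^{k_i}} + e₁^{(2i−3)·2^{k_i}−n}·x + e₁^{(2i−4)·2^{k_i}}·(Σ_{j=0}^{k_i−1} e₁^{2^{k_i}−2^{j+1}}·e₂^{2^j}) for 3 ≤ i ≤ s. The isomorphism is given by e₁ ↦ ε̄₁, e₂ ↦ ε̄₂² + ε̄₁ε̄₂, e_i ↦ ε̄_i + ε̄₁^{2i−4}ε̄₂ for 3 ≤ i ≤ s, and x ↦ ε̄₁^{n−1}ε̄₂. (All exponents occurring are non-negative since 2^{k₂} ≥ n and (2i−3)·2^{k_i} ≥ n.) -/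

import Mathlib

open MvPolynomial

set_option synthInstance.maxHeartbeats 1000000
set_option maxHeartbeats 1000000

noncomputable section

/-- The ideal `(ε₁ⁿ, ε₂^{2^{k₂}}, …, ε_s^{2^{k_s}})` of `𝔽₂[ε₁,…,ε_s]`, where
`s = n/2 + 1` and the variable of index `i : Fin (n/2+1)` is `ε_{i+1}`. -/
def relIdealP (n : ℕ) (k : ℕ → ℕ) : Ideal (MvPolynomial (Fin (n / 2 + 1)) (ZMod 2)) :=
  Ideal.span (Set.range fun i : Fin (n / 2 + 1) =>
    X i ^ (if (i : ℕ) = 0 then n else 2 ^ k ((i : ℕ) + 1)))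

/-- `P = 𝔽₂[ε₁,…,ε_s]/(ε₁ⁿ, ε₂^{2^{k₂}}, …, ε_s^{2^{k_s}})` with `s = n/2 + 1`. -/
abbrev P (n : ℕ) (k : ℕ → ℕ) : Type :=
  MvPolynomial (Fin (n / 2 + 1)) (ZMod 2) ⧸ relIdealP n k

/-- `ε̄_{i+1}`, the class in `P` of the variable of index `i`. -/
def eps (n : ℕ) (k : ℕ → ℕ) (i : Fin (n / 2 + 1)) : P n k :=
  Ideal.Quotient.mk _ (X i)

/-- The subalgebra `P^τ` of `τ`-invariant elements. -/
def Pfix (n : ℕ) (k : ℕ → ℕ) (τ : P n k →ₐ[ZMod 2] P n k) : Subalgebra (ZMod 2) (P n k) :=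
  AlgHom.equalizer τ (AlgHom.id (ZMod 2) (P n k))

end

noncomputable section

/-- The sum `Σ_{j=0}^{K−1} e₁^{2^K − 2^{j+1}}·e₂^{2^j}` in `𝔽₂[e₁,…,e_s,x]`, where the
variable of index `c < s` is `e_{c+1}` and the last variable (index `s = n/2+1`) is `x`. -/
def sumTermC (n : ℕ) (K : ℕ) : MvPolynomial (Fin (n / 2 + 2)) (ZMod 2) :=
  ∑ j ∈ Finset.range K, X 0 ^ (2 ^ K - 2 ^ (j + 1)) * X 1 ^ 2 ^ j

/-- The relation `h_i = e_i^{2^{k_i}} + e₁^{(2i−3)·2^{k_i}−n}·x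
+ e₁^{(2i−4)·2^{k_i}}·(Σ_{j=0}^{k_i−1} e₁^{2^{k_i}−2^{j+1}}·e₂^{2^j})` for `3 ≤ i ≤ s`
(and `0` for `i` out of range). -/
def hrelC (n : ℕ) (k : ℕ → ℕ) (i : ℕ) : MvPolynomial (Fin (n / 2 + 2)) (ZMod 2) :=
  if h : 3 ≤ i ∧ i ≤ n / 2 + 1 then
    X ⟨i - 1, by omega⟩ ^ 2 ^ k i
      + X 0 ^ ((2 * i - 3) * 2 ^ k i - n) * X ⟨n / 2 + 1, by omega⟩
      + X 0 ^ ((2 * i - 4) * 2 ^ k i) * sumTermC n (k i)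
  else 0

/-- The ideal `(e₁^m, e₁·x, x², h₂, h₃, …, h_s)` of `𝔽₂[e₁,…,e_s,x]`, where
`h₂ = e₁^{2^{k₂}−n}·x + Σ_{j=0}^{k₂−1} e₁^{2^{k₂}−2^{j+1}}·e₂^{2^j}`. -/
def relIdealC (n m : ℕ) (k : ℕ → ℕ) : Ideal (MvPolynomial (Fin (n / 2 + 2)) (ZMod 2)) :=
  Ideal.span
    ({X 0 ^ m,
      X 0 * X ⟨n / 2 + 1, by omega⟩,
      X ⟨n / 2 + 1, by omega⟩ ^ 2,
      X 0 ^ (2 ^ k 2 - n) * X ⟨n / 2 + 1, by omega⟩ + sumTermC n (k 2)} ∪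
      Set.range (hrelC n k))

end

/-!
Write `t = ε̄₁` and `y = ε̄₂`, so that `τ y = y + t`. Modulo `(e₁, x)` the relations leave finitely
many monomials `m_β`, and since `e₁x = x² = 0` the ring `𝔽₂[e₁, …, e_s, x]/(e₁ⁿ, e₁x, x², h_i)` is
spanned by the `tᵃ m_β` with `a < n` together with the `x m_β`. Over the image of this ring, `P` is
generated by `y`, which satisfies `y² = (y² + ty) + y(-t)`, and `x` maps to `tⁿ⁻¹y`; hence `P` is
spanned by the `tᵃ m_β` and the `y tᵃ m_β`. There are `dim P` of these, so they form a basis, and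
the ring of the presentation embeds in `P`. An element `p + y q` with `p, q` in the span of the
`tᵃ m_β` is invariant exactly when `t q = 0`, i.e. when `q` lies in the span of the `tⁿ⁻¹ m_β`, and
then `y q` is in the span of the `x m_β`: the image is all of `P^τ`.

That `h_i ↦ 0` comes from iterating the Artin–Schreier-type relation `y² = (y² + ty) + ty`. The
inequality `n ≤ (2i - 3) 2^{k_i}` is obtained by applying `τ` to `ε̄_i ^ 2^{k_i} = 0`.
-/

section MonomialSpan

variable {R A σ : Type*} [CommRing R] [CommRing A] [Algebra R A] [Fintype σ]

theorem span_prod_pow_sup_restrictScalars_eq_top {g : σ → A}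
    (hg : Algebra.adjoin R (Set.range g) = ⊤) {d : σ → ℕ} {I : Ideal A}
    (hI : ∀ i, g i ^ d i ∈ I) :
    Submodule.span R (Set.range fun β : ∀ i, Fin (d i) => ∏ i, g i ^ (β i : ℕ)) ⊔
      I.restrictScalars R = ⊤ := by
  refine eq_top_iff.2 fun a _ => ?_
  obtain ⟨f, rfl⟩ : a ∈ (aeval (R := R) g).range := by
    rw [← Algebra.adjoin_range_eq_range_aeval, hg]
    trivial
  induction f using MvPolynomial.induction_on' with
  | add p q hp hq =>
    rw [AlgHom.toRingHom_eq_coe, RingHom.coe_coe, map_add]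
    exact add_mem (hp trivial) (hq trivial)
  | monomial e c =>
    rw [AlgHom.toRingHom_eq_coe, RingHom.coe_coe, aeval_monomial, ← Algebra.smul_def,
      Finsupp.prod_fintype _ _ fun i => pow_zero _]
    refine Submodule.smul_mem _ c ?_
    by_cases he : ∀ i, e i < d i
    · exact Submodule.mem_sup_left (Submodule.subset_span ⟨fun i => ⟨e i, he i⟩, rfl⟩)
    · push Not at he
      obtain ⟨i, hi⟩ := he
      exact Submodule.mem_sup_right (I.mem_of_dvd ((pow_dvd_pow _ hi).trans
        (Finset.dvd_prod_of_mem (fun j => g j ^ e j) (Finset.mem_univ i))) (hI i))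

end MonomialSpan

section TruncatedPolynomial

variable {R σ : Type*} [CommRing R]

theorem mem_span_range_X_pow_iff {d : σ → ℕ} {f : MvPolynomial σ R} :
    f ∈ Ideal.span (Set.range fun i => (X i : MvPolynomial σ R) ^ d i) ↔
      ∀ e ∈ f.support, ∃ i, d i ≤ e i := by
  have hrange : (Set.range fun i => (X i : MvPolynomial σ R) ^ d i) =
      (fun e => monomial e 1) '' Set.range fun i => Finsupp.single i (d i) := by
    rw [← Set.range_comp]
    exact congrArg Set.range (funext fun _ => X_pow_eq_monomial)
  simp [hrange, mem_ideal_span_monomial_image, Finsupp.single_le_iff]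

theorem linearIndependent_mk_prod_X_pow [Fintype σ] (d : σ → ℕ) :
    LinearIndependent R fun β : ∀ i, Fin (d i) =>
      ∏ i, Ideal.Quotient.mk (Ideal.span (Set.range fun i => (X i : MvPolynomial σ R) ^ d i))
        (X i) ^ (β i : ℕ) := by
  let e (β : ∀ i, Fin (d i)) : σ →₀ ℕ := Finsupp.equivFunOnFinite.symm fun i => β i
  have he : Function.Injective e := fun β γ h =>
    funext fun i => Fin.ext (DFunLike.congr_fun h i)
  have hmonomial (β : ∀ i, Fin (d i)) :
      ∏ i, (X i : MvPolynomial σ R) ^ (β i : ℕ) = monomial (e β) 1 := by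
    rw [monomial_eq, Finsupp.prod_fintype _ _ fun i => pow_zero _, C_1, one_mul]
    rfl
  classical
  refine Fintype.linearIndependent_iff.2 fun c hc β => ?_
  simp only [← map_pow, ← map_prod, hmonomial, ← Ideal.Quotient.mkₐ_eq_mk R, ← map_smul,
    ← map_sum] at hc
  rw [Ideal.Quotient.mkₐ_eq_mk, Ideal.Quotient.eq_zero_iff_mem, mem_span_range_X_pow_iff] at hc
  by_contra hβ
  obtain ⟨i, hi⟩ := hc (e β) (by simpa [coeff_sum, coeff_monomial, he.eq_iff] using hβ)
  exact hi.not_gt (β i).is_lt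

theorem adjoin_range_mk_X (I : Ideal (MvPolynomial σ R)) :
    Algebra.adjoin R (Set.range fun i => Ideal.Quotient.mk I (X i)) = ⊤ := by
  have := congrArg (Subalgebra.map (Ideal.Quotient.mkₐ R I)) (adjoin_range_X (R := R) (σ := σ))
  rwa [AlgHom.map_adjoin, ← Set.range_comp, Algebra.map_top,
    (AlgHom.range_eq_top _).2 (Ideal.Quotient.mkₐ_surjective R I)] at this

theorem finrank_quotient_span_range_X_pow [Nontrivial R] [Fintype σ] (d : σ → ℕ) :
    Module.finrank R
      (MvPolynomial σ R ⧸ Ideal.span (Set.range fun i => (X i : MvPolynomial σ R) ^ d i)) =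
        ∏ i, d i := by
  have hspan := span_prod_pow_sup_restrictScalars_eq_top (d := d) (I := ⊥) (adjoin_range_mk_X
    (Ideal.span (Set.range fun i => (X i : MvPolynomial σ R) ^ d i))) fun i => by
      rw [← map_pow, Ideal.mem_bot, Ideal.Quotient.eq_zero_iff_mem]
      exact Ideal.subset_span ⟨i, rfl⟩
  rw [Submodule.restrictScalars_bot, sup_bot_eq] at hspan
  classical
  rw [Module.finrank_eq_card_basis
    (Module.Basis.mk (linearIndependent_mk_prod_X_pow (R := R) d) hspan.ge)]
  simp

theorem mk_X_pow_eq_zero_iff [Nontrivial R] {d : σ → ℕ} (hd : ∀ i, d i ≠ 0) {i : σ} {N : ℕ} :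
    Ideal.Quotient.mk (Ideal.span (Set.range fun i => (X i : MvPolynomial σ R) ^ d i))
      (X i) ^ N = 0 ↔ d i ≤ N := by
  rw [← map_pow, Ideal.Quotient.eq_zero_iff_mem, mem_span_range_X_pow_iff, support_X_pow]
  refine ⟨fun h => ?_, fun h => by simpa using ⟨i, by simpa using h⟩⟩
  obtain ⟨j, hj⟩ := h _ (Finset.mem_singleton_self _)
  obtain rfl : i = j := by
    by_contra hij
    exact hd j (by simpa [hij] using hj)
  simpa using hj

end TruncatedPolynomial

section ArtinSchreier

variable {R : Type*} [CommRing R] [CharP R 2]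

theorem pow_two_pow_eq_add_sum_pow_mul (t y : R) (K : ℕ) :
    y ^ 2 ^ K = t ^ (2 ^ K - 1) * y +
      ∑ j ∈ Finset.range K, t ^ (2 ^ K - 2 ^ (j + 1)) * (y ^ 2 + t * y) ^ 2 ^ j := by
  induction K with
  | zero => simp
  | succ K ih =>
    have hterm (j : ℕ) : t ^ (2 ^ (K + 1) - 2 ^ (j + 1 + 1)) * (y ^ 2 + t * y) ^ 2 ^ (j + 1) =
        (t ^ (2 ^ K - 2 ^ (j + 1)) * (y ^ 2 + t * y) ^ 2 ^ j) ^ 2 := by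
      rw [mul_pow, ← pow_mul, ← pow_mul, ← pow_succ, Nat.sub_mul, ← pow_succ, ← pow_succ]
    have hsquare : t ^ (2 ^ (K + 1) - 2 ^ (0 + 1)) = (t ^ (2 ^ K - 1)) ^ 2 := by
      rw [← pow_mul, Nat.sub_mul, ← pow_succ, one_mul, zero_add, pow_one]
    have hodd : t ^ (2 ^ (K + 1) - 1) = (t ^ (2 ^ K - 1)) ^ 2 * t := by
      rw [← pow_mul, ← pow_succ]
      congr 1
      have := Nat.one_le_two_pow (n := K)
      omega
    rw [Finset.sum_range_succ', Finset.sum_congr rfl fun j _ => hterm j, ← CharTwo.sum_sq, hodd,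
      hsquare, pow_succ 2 K, pow_mul y, ih, CharTwo.add_sq]
    linear_combination -(t ^ (2 ^ K - 1)) ^ 2 * t * y * CharTwo.two_eq_zero (R := R)

end ArtinSchreier

section PowMul

variable {R A B : Type*} [CommRing R] [CommRing A] [Algebra R A]

/-- The family `tᵃ m_β` with `a < n`. When `tⁿ = 0` and it is a basis of a submodule `M`, it
expresses that `M` is free over `R[t]/(tⁿ)` on the `m_β`. -/
def powMul (t : A) (n : ℕ) (m : B → A) (a : Fin n × B) : A :=
  t ^ (a.1 : ℕ) * m a.2

theorem mem_span_mul_of_mul_eq_zero [Finite B] {t q : A} {n : ℕ} {m : B → A} (ht : t ^ n = 0)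
    (hm : LinearIndependent R (powMul t n m)) (hq : q ∈ Submodule.span R (Set.range (powMul t n m)))
    (htq : t * q = 0) : q ∈ Submodule.span R (Set.range fun β => t ^ (n - 1) * m β) := by
  have := Fintype.ofFinite B
  obtain ⟨c, rfl⟩ := (Submodule.mem_span_range_iff_exists_fun R).1 hq
  cases n with
  | zero => simp
  | succ N =>
    have hshift : LinearIndependent R fun a : Fin N × B => powMul t (N + 1) m (a.1.succ, a.2) :=
      hm.comp (fun a : Fin N × B => (a.1.succ, a.2)) fun a b h => by
        simpa [Prod.ext_iff] using h
    have hrelation : ∑ a : Fin N × B, c (a.1.castSucc, a.2) • powMul t (N + 1) m (a.1.succ, a.2) =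
        0 := by
      simp only [powMul, Finset.mul_sum, mul_smul_comm, ← mul_assoc, ← pow_succ'] at htq
      simp only [Fintype.sum_prod_type, Fin.sum_univ_castSucc (n := N), Fin.val_last, ht, zero_mul,
        smul_zero, Finset.sum_const_zero, add_zero, Fin.val_castSucc] at htq
      simpa only [powMul, Fintype.sum_prod_type, Fin.val_succ] using htq
    have hcoeff (a : Fin N) (β : B) : c (a.castSucc, β) = 0 :=
      Fintype.linearIndependent_iff.1 hshift _ hrelation (a, β)
    rw [Fintype.sum_prod_type, Fin.sum_univ_castSucc]
    simp only [hcoeff, zero_smul, Finset.sum_const_zero, zero_add]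
    exact Submodule.sum_mem _ fun β _ => Submodule.smul_mem _ _ (Submodule.subset_span ⟨β, rfl⟩)

theorem span_powMul_mul_eq_top {t x : A} {n : ℕ} {m : B → A} (ht : t ^ n = 0) (htx : t * x = 0)
    (hx : x ^ 2 = 0)
    (hm : Submodule.span R (Set.range m) ⊔ (Ideal.span {t, x}).restrictScalars R = ⊤) :
    Submodule.span R (Set.range (Sum.elim (powMul t n m) fun β => x * m β)) = ⊤ := by
  set W := Submodule.span R (Set.range (Sum.elim (powMul t n m) fun β => x * m β))
  have hdecomp (p : A) :
      ∃ w ∈ Submodule.span R (Set.range m), ∃ r r', p = w + (r * t + r' * x) := by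
    obtain ⟨w, hw, _, hr, rfl⟩ := Submodule.mem_sup.1 (hm.ge (Submodule.mem_top (x := p)))
    obtain ⟨r, r', rfl⟩ := Ideal.mem_span_pair.1 hr
    exact ⟨w, hw, r, r', rfl⟩
  have hmulLeft (z : A) (hz : ∀ β, z * m β ∈ W) (w : A) (hw : w ∈ Submodule.span R (Set.range m)) :
      z * w ∈ W :=
    (Submodule.span_le (p := W.comap (LinearMap.mulLeft R z))).2 (Set.range_subset_iff.2 hz) hw
  have hx_mul (p : A) : x * p ∈ W := by
    obtain ⟨w, hw, r, r', rfl⟩ := hdecomp p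
    have : x * (w + (r * t + r' * x)) = x * w := by linear_combination r * htx + r' * hx
    rw [this]
    exact hmulLeft x (fun β => Submodule.subset_span ⟨.inr β, rfl⟩) w hw
  have hpow_mul (i : ℕ) (hi : i ≤ n) : ∀ p : A, t ^ i * p ∈ W := by
    induction hi using Nat.decreasingInduction with
    | self => simp [ht]
    | of_succ i hi ih =>
      intro p
      obtain ⟨w, hw, r, r', rfl⟩ := hdecomp p
      have : t ^ i * (w + (r * t + r' * x)) = t ^ i * w + t ^ (i + 1) * r + x * (t ^ i * r') := by
        ring
      rw [this]
      exact add_mem (add_mem (hmulLeft _ (fun β => Submodule.subset_span ⟨.inl (⟨i, hi⟩, β), rfl⟩)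
        w hw) (ih r)) (hx_mul _)
  exact eq_top_iff.2 fun p _ => by simpa using hpow_mul 0 n.zero_le p

end PowMul

section QuadraticExtension

variable {R S A B : Type*} [CommRing R] [CommRing S] [CommRing A] [Algebra R S] [Algebra R A]

theorem exists_eq_add_mul_of_adjoin_eq_top {φ : S →ₐ[R] A} {y : A}
    (hgen : Algebra.adjoin R (insert y (φ.range : Set A)) = ⊤) {u v : S}
    (hy : y ^ 2 = φ u + y * φ v) (a : A) : ∃ p q, a = φ p + y * φ q := by
  induction (hgen.ge trivial : a ∈ Algebra.adjoin R (insert y (φ.range : Set A)))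
    using Algebra.adjoin_induction with
  | mem a ha =>
    rcases ha with rfl | ⟨p, rfl⟩
    · exact ⟨0, 1, by simp⟩
    · exact ⟨p, 0, by simp⟩
  | algebraMap r => exact ⟨algebraMap R S r, 0, by simp⟩
  | add _ _ _ _ ha hb =>
    obtain ⟨p, q, rfl⟩ := ha
    obtain ⟨p', q', rfl⟩ := hb
    exact ⟨p + p', q + q', by simp only [map_add]; ring⟩
  | mul _ _ _ _ ha hb =>
    obtain ⟨p, q, rfl⟩ := ha
    obtain ⟨p', q', rfl⟩ := hb
    refine ⟨p * p' + q * q' * u, p * q' + q * p' + q * q' * v, ?_⟩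
    simp only [map_add, map_mul]
    linear_combination φ q * φ q' * hy

variable {φ : S →ₐ[R] A} {t x : S} {y : A} {n : ℕ} {m : B → S}

theorem span_powMul_sumElim_mul_eq_top (ht : t ^ n = 0)
    (hS : Submodule.span R (Set.range (Sum.elim (powMul t n m) fun β => x * m β)) = ⊤)
    (hφx : φ x = φ t ^ (n - 1) * y)
    (hgen : Algebra.adjoin R (insert y (φ.range : Set A)) = ⊤) {u v : S}
    (hy : y ^ 2 = φ u + y * φ v) :
    Submodule.span R (Set.range (Sum.elim (powMul (φ t) n (φ ∘ m))
      fun a => y * powMul (φ t) n (φ ∘ m) a)) = ⊤ := by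
  set W := Submodule.span R (Set.range (Sum.elim (powMul (φ t) n (φ ∘ m))
      fun a => y * powMul (φ t) n (φ ∘ m) a))
  have hleft (a) : powMul (φ t) n (φ ∘ m) a ∈ W := Submodule.subset_span ⟨.inl a, rfl⟩
  have hright (a) : y * powMul (φ t) n (φ ∘ m) a ∈ W := Submodule.subset_span ⟨.inr a, rfl⟩
  have hφ_powMul (a) : φ (powMul t n m a) = powMul (φ t) n (φ ∘ m) a := by
    simp [powMul]
  have hφx_mul (β) : φ (x * m β) ∈ W := by
    rcases n.eq_zero_or_pos with rfl | hn
    · have : Subsingleton S := subsingleton_of_zero_eq_one (by simpa using ht.symm)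
      simp [Subsingleton.elim (x * m β) 0]
    · convert hright (⟨n - 1, by omega⟩, β) using 1
      simp only [map_mul, hφx, powMul, Function.comp_apply]
      ring
  have hrange (p : S) : φ p ∈ W := by
    refine (Submodule.span_le (p := W.comap φ.toLinearMap)).2 ?_
      (hS.ge (Submodule.mem_top (x := p)))
    rintro _ ⟨a | β, rfl⟩
    · simpa [hφ_powMul] using hleft a
    · exact hφx_mul β
  have hmul_range (q : S) : y * φ q ∈ W := by
    refine (Submodule.span_le (p := W.comap (LinearMap.mulLeft R y ∘ₗ φ.toLinearMap))).2 ?_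
      (hS.ge (Submodule.mem_top (x := q)))
    rintro _ ⟨a | β, rfl⟩
    · simpa [hφ_powMul] using hright a
    · have : y * φ (x * m β) = φ (t ^ (n - 1) * u * m β + x * v * m β) := by
        simp only [map_add, map_mul, map_pow, hφx]
        linear_combination φ t ^ (n - 1) * φ (m β) * hy
      change y * φ (x * m β) ∈ W
      rw [this]
      exact hrange _
  refine eq_top_iff.2 fun a _ => ?_
  obtain ⟨p, q, rfl⟩ := exists_eq_add_mul_of_adjoin_eq_top hgen hy a
  exact add_mem (hrange p) (hmul_range q)

theorem injective_of_linearIndependent_powMul (ht : t ^ n = 0)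
    (hS : Submodule.span R (Set.range (Sum.elim (powMul t n m) fun β => x * m β)) = ⊤)
    (hφx : φ x = φ t ^ (n - 1) * y)
    (hA : LinearIndependent R (Sum.elim (powMul (φ t) n (φ ∘ m))
      fun a => y * powMul (φ t) n (φ ∘ m) a)) :
    Function.Injective φ := by
  rcases n.eq_zero_or_pos with rfl | hn
  · have : Subsingleton S := subsingleton_of_zero_eq_one (by simpa using ht.symm)
    exact Function.injective_of_subsingleton φ
  refine LinearMap.injective_of_linearIndependent (f := φ.toLinearMap) hS ?_
  have hsub := hA.comp (Sum.map id fun β => ((⟨n - 1, by omega⟩ : Fin n), β))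
    (Function.injective_id.sumMap fun β γ h => by simpa using h)
  have hcomp : (φ.toLinearMap ∘ Sum.elim (powMul t n m) fun β => x * m β) =
      Sum.elim (powMul (φ t) n (φ ∘ m)) (fun a => y * powMul (φ t) n (φ ∘ m) a) ∘
        Sum.map id fun β => ((⟨n - 1, by omega⟩ : Fin n), β) := by
    funext b
    rcases b with a | β
    · simp [powMul]
    · simp only [Function.comp_apply, Sum.elim_inr, Sum.map_inr, AlgHom.toLinearMap_apply, map_mul,
        hφx, powMul]
      ring
  rwa [hcomp]

theorem range_eq_equalizer_of_linearIndependent_powMul [Finite B] (ht : t ^ n = 0)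
    (hφx : φ x = φ t ^ (n - 1) * y)
    (hA : LinearIndependent R (Sum.elim (powMul (φ t) n (φ ∘ m))
      fun a => y * powMul (φ t) n (φ ∘ m) a))
    (hspan : Submodule.span R (Set.range (Sum.elim (powMul (φ t) n (φ ∘ m))
      fun a => y * powMul (φ t) n (φ ∘ m) a)) = ⊤)
    {τ : A →ₐ[R] A} (hτφ : τ.comp φ = φ) (hτy : τ y = y + φ t) :
    φ.range = AlgHom.equalizer τ (AlgHom.id R A) := by
  have hfix (p : S) : τ (φ p) = φ p := DFunLike.congr_fun hτφ p
  have hrange {z : A} (hz : z ∈ Submodule.span R (Set.range (powMul (φ t) n (φ ∘ m)))) :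
      z ∈ φ.range := by
    refine (Submodule.span_le (p := φ.range.toSubmodule)).2 ?_ hz
    rintro _ ⟨a, rfl⟩
    exact ⟨powMul t n m a, by simp [powMul]⟩
  refine le_antisymm ?_ fun w hw => ?_
  · rintro _ ⟨p, rfl⟩
    exact hfix p
  rw [Set.Sum.elim_range, Submodule.span_union] at hspan
  obtain ⟨p, hp, z, hz, rfl⟩ := Submodule.mem_sup.1 (hspan.ge (Submodule.mem_top (x := w)))
  obtain ⟨q, hq, rfl⟩ : ∃ q ∈ Submodule.span R (Set.range (powMul (φ t) n (φ ∘ m))), y * q = z := by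
    have := Submodule.map_span (LinearMap.mulLeft R y) (Set.range (powMul (φ t) n (φ ∘ m)))
    rw [← Set.range_comp] at this
    exact this.ge hz
  have htq : φ t * q = 0 := by
    obtain ⟨p', rfl⟩ := hrange hp
    obtain ⟨q', rfl⟩ := hrange hq
    have hw' : τ (φ p' + y * φ q') = φ p' + y * φ q' := hw
    simp only [map_add, map_mul, hfix, hτy] at hw'
    linear_combination hw'
  have hq_top := mem_span_mul_of_mul_eq_zero (by rw [← map_pow, ht, map_zero])
    (hA.comp _ Sum.inl_injective) hq htq
  refine add_mem (hrange hp)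
    ((Submodule.span_le (p := φ.range.toSubmodule.comap (LinearMap.mulLeft R y))).2 ?_ hq_top)
  rintro _ ⟨β, rfl⟩
  refine ⟨x * m β, ?_⟩
  simp only [LinearMap.mulLeft_apply, Function.comp_apply, AlgHom.toRingHom_eq_coe,
    RingHom.coe_coe, map_mul, hφx]
  ring

end QuadraticExtension

section Quotient

variable {R S A : Type*} [CommRing R] [CommRing S] [CommRing A] [Algebra R S] [Algebra R A]

theorem exists_algEquiv_quotient_of_surjective {ψ : S →ₐ[R] A} (hψ : Function.Surjective ψ)
    {I : Ideal S} {J : Ideal A} (hIJ : I = J.comap ψ) :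
    ∃ e : (S ⧸ I) ≃ₐ[R] A ⧸ J, ∀ f, e (Ideal.Quotient.mk I f) = Ideal.Quotient.mk J (ψ f) := by
  have hker : I = RingHom.ker ((Ideal.Quotient.mkₐ R J).comp ψ) := by
    ext f
    simp [hIJ, RingHom.mem_ker, Ideal.Quotient.eq_zero_iff_mem]
  exact ⟨(Ideal.quotientEquivAlgOfEq R hker).trans (Ideal.quotientKerAlgEquivOfSurjective
    ((Ideal.Quotient.mkₐ_surjective R J).comp hψ)), fun _ => rfl⟩

end Quotient

section TruncatedAlgebra

variable {n : ℕ} {k : ℕ → ℕ}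

theorem finrank_P (n : ℕ) (k : ℕ → ℕ) :
    Module.finrank (ZMod 2) (P n k) =
      ∏ i : Fin (n / 2 + 1), if (i : ℕ) = 0 then n else 2 ^ k ((i : ℕ) + 1) :=
  finrank_quotient_span_range_X_pow _

theorem adjoin_range_eps (n : ℕ) (k : ℕ → ℕ) :
    Algebra.adjoin (ZMod 2) (Set.range (eps n k)) = ⊤ :=
  adjoin_range_mk_X _

theorem eps_zero_pow_eq_zero_iff [NeZero n] {N : ℕ} : eps n k 0 ^ N = 0 ↔ n ≤ N := by
  refine (mk_X_pow_eq_zero_iff fun i => ?_).trans (by simp)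
  split_ifs
  exacts [NeZero.ne n, (Nat.two_pow_pos _).ne']

theorem eps_pow_two_pow_eq_zero {i : Fin (n / 2 + 1)} (hi : (i : ℕ) ≠ 0) :
    eps n k i ^ 2 ^ k ((i : ℕ) + 1) = 0 := by
  rw [eps, ← map_pow, Ideal.Quotient.eq_zero_iff_mem]
  exact Ideal.subset_span ⟨i, by simp only [hi, if_false]⟩

instance [NeZero n] : Nontrivial (P n k) := by
  refine Module.nontrivial_of_finrank_pos (R := ZMod 2) ?_
  rw [finrank_P]
  refine Finset.prod_pos fun i _ => ?_
  split_ifs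
  exacts [NeZero.pos n, Nat.two_pow_pos _]

instance [NeZero n] : CharP (P n k) 2 :=
  charP_of_injective_algebraMap (algebraMap (ZMod 2) (P n k)).injective 2

theorem val_one_fin_div_two [n.AtLeastTwo] : ((1 : Fin (n / 2 + 1)) : ℕ) = 1 := by
  have := Nat.AtLeastTwo.prop (n := n)
  rw [Fin.val_one', Nat.mod_eq_of_lt (by omega)]

theorem le_mul_two_pow_of_algHom [NeZero n] {τ : P n k →ₐ[ZMod 2] P n k}
    {i : Fin (n / 2 + 1)} (hi : (i : ℕ) ≠ 0)
    (hτi : τ (eps n k i) = eps n k i + eps n k 0 ^ (2 * (i : ℕ) - 1)) :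
    n ≤ (2 * (i : ℕ) - 1) * 2 ^ k ((i : ℕ) + 1) := by
  have h := congrArg τ (eps_pow_two_pow_eq_zero (k := k) hi)
  rw [map_pow, map_zero, hτi, add_pow_char_pow, eps_pow_two_pow_eq_zero hi, zero_add,
    ← pow_mul] at h
  exact eps_zero_pow_eq_zero_iff.1 h

end TruncatedAlgebra

section Invariants

variable {n : ℕ} {k : ℕ → ℕ}

theorem relIdealC_le_iff {m : ℕ} {J : Ideal (MvPolynomial (Fin (n / 2 + 2)) (ZMod 2))} :
    relIdealC n m k ≤ J ↔ X 0 ^ m ∈ J ∧ X 0 * X (Fin.last _) ∈ J ∧ X (Fin.last _) ^ 2 ∈ J ∧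
      X 0 ^ (2 ^ k 2 - n) * X (Fin.last _) + sumTermC n (k 2) ∈ J ∧ ∀ i, hrelC n k i ∈ J := by
  simp only [relIdealC, Ideal.span_le, Set.union_subset_iff, Set.insert_subset_iff,
    Set.singleton_subset_iff, Set.range_subset_iff, SetLike.mem_coe, and_assoc]
  rfl

theorem relIdealC_eq_sup {m : ℕ} (hmn : m ≤ n) :
    relIdealC n m k = Ideal.span {X 0 ^ m} ⊔ relIdealC n n k := by
  obtain ⟨hm, hrest⟩ := relIdealC_le_iff.1 (le_refl (relIdealC n m k))
  obtain ⟨-, hrest'⟩ := relIdealC_le_iff.1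
    (le_sup_right : relIdealC n n k ≤ Ideal.span {X 0 ^ m} ⊔ relIdealC n n k)
  refine le_antisymm (relIdealC_le_iff.2 ⟨?_, hrest'⟩)
    (sup_le ((Ideal.span_singleton_le_iff_mem _).2 hm) (relIdealC_le_iff.2 ⟨?_, hrest⟩))
  · exact Ideal.mem_sup_left (Ideal.mem_span_singleton_self _)
  · exact Ideal.mem_of_dvd _ (pow_dvd_pow _ hmn) hm

theorem hrelC_castSucc {i : Fin (n / 2 + 1)} (hi : 2 ≤ (i : ℕ)) :
    hrelC n k (i + 1) = X i.castSucc ^ 2 ^ k (i + 1) +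
      X 0 ^ ((2 * (i : ℕ) - 1) * 2 ^ k (i + 1) - n) * X (Fin.last _) +
      X 0 ^ ((2 * (i : ℕ) - 2) * 2 ^ k (i + 1)) * sumTermC n (k (i + 1)) := by
  rw [hrelC, dif_pos ⟨by omega, by omega⟩]
  have h3 : 2 * ((i : ℕ) + 1) - 3 = 2 * i - 1 := by omega
  have h4 : 2 * ((i : ℕ) + 1) - 4 = 2 * i - 2 := by omega
  rw [h3, h4]
  rfl

/-- The inequalities `(2i - 3) * 2 ^ k i ≥ n` for `2 ≤ i ≤ s`, equivalent to the existence of the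
homomorphism `τ`. They make the truncated subtractions in the relations `h_i` genuine. -/
def ShiftBound (n : ℕ) (k : ℕ → ℕ) : Prop :=
  ∀ i, 2 ≤ i → i ≤ n / 2 + 1 → n ≤ (2 * i - 3) * 2 ^ k i

/-- The elements of `P` that generate the invariants: the proposed images of `e₁, …, e_s, x`. -/
noncomputable def invGen (n : ℕ) (k : ℕ → ℕ) : Fin (n / 2 + 2) → P n k :=
  Fin.snoc (α := fun _ => P n k)
    (fun i => if (i : ℕ) = 0 then eps n k 0
      else if (i : ℕ) = 1 then eps n k 1 ^ 2 + eps n k 0 * eps n k 1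
      else eps n k i + eps n k 0 ^ (2 * (i : ℕ) - 2) * eps n k 1)
    (eps n k 0 ^ (n - 1) * eps n k 1)

theorem invGen_zero : invGen n k 0 = eps n k 0 :=
  Fin.snoc_castSucc (α := fun _ => P n k) (i := 0) ..

theorem invGen_castSucc {i : Fin (n / 2 + 1)} (hi : 2 ≤ (i : ℕ)) :
    invGen n k i.castSucc = eps n k i + eps n k 0 ^ (2 * (i : ℕ) - 2) * eps n k 1 := by
  rw [invGen, Fin.snoc_castSucc, if_neg (by omega), if_neg (by omega)]

theorem invGen_last : invGen n k (Fin.last _) = eps n k 0 ^ (n - 1) * eps n k 1 :=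
  Fin.snoc_last (α := fun _ => P n k) ..

variable [n.AtLeastTwo]

theorem invGen_one : invGen n k 1 = eps n k 1 ^ 2 + eps n k 0 * eps n k 1 := by
  have h : (1 : Fin (n / 2 + 2)) = (1 : Fin (n / 2 + 1)).castSucc :=
    Fin.ext val_one_fin_div_two.symm
  rw [h, invGen, Fin.snoc_castSucc, if_neg (by rw [val_one_fin_div_two]; exact one_ne_zero),
    if_pos val_one_fin_div_two]

theorem eps_one_pow_two_pow_eq_zero : eps n k 1 ^ 2 ^ k 2 = 0 := by
  have h : ((1 : Fin (n / 2 + 1)) : ℕ) ≠ 0 := by rw [val_one_fin_div_two]; exact one_ne_zero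
  simpa only [val_one_fin_div_two] using eps_pow_two_pow_eq_zero (k := k) h

theorem ShiftBound.le_two_pow (hk : ShiftBound n k) : n ≤ 2 ^ k 2 := by
  have := Nat.AtLeastTwo.prop (n := n)
  simpa using hk 2 le_rfl (by omega)

theorem aeval_invGen_sumTermC (K : ℕ) :
    aeval (invGen n k) (sumTermC n K) =
      eps n k 1 ^ 2 ^ K + eps n k 0 ^ (2 ^ K - 1) * eps n k 1 := by
  simp only [sumTermC, map_sum, map_mul, map_pow, aeval_X, invGen_zero, invGen_one]
  rw [pow_two_pow_eq_add_sum_pow_mul (eps n k 0) (eps n k 1) K, add_right_comm,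
    CharTwo.add_self_eq_zero, zero_add]

theorem aeval_invGen_hrelC (hk : ShiftBound n k) (i : ℕ) :
    aeval (invGen n k) (hrelC n k i) = 0 := by
  by_cases hi : 3 ≤ i ∧ i ≤ n / 2 + 1
  swap
  · rw [hrelC, dif_neg hi, map_zero]
  obtain ⟨j, rfl⟩ : ∃ j : Fin (n / 2 + 1), i = j + 1 :=
    ⟨⟨i - 1, by omega⟩, (Nat.sub_add_cancel (by omega)).symm⟩
  have hj : 2 ≤ (j : ℕ) := by omega
  set N := 2 ^ k (j + 1)
  have hN : 1 ≤ N := Nat.one_le_two_pow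
  have hbound : n ≤ (2 * (j : ℕ) - 1) * N := by
    have := hk (j + 1) (by omega) (by omega)
    rwa [show 2 * ((j : ℕ) + 1) - 3 = 2 * j - 1 by omega] at this
  have hsplit : (2 * (j : ℕ) - 1) * N = (2 * j - 2) * N + N := by
    rw [← Nat.succ_mul]
    congr 1
    omega
  have hexp₁ : eps n k 0 ^ ((2 * (j : ℕ) - 1) * N - n) * eps n k 0 ^ (n - 1) =
      eps n k 0 ^ ((2 * (j : ℕ) - 2) * N) * eps n k 0 ^ (N - 1) := by
    rw [← pow_add, ← pow_add]
    congr 1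
    omega
  rw [hrelC_castSucc hj]
  simp only [map_add, map_mul, map_pow, aeval_X, aeval_invGen_sumTermC, invGen_zero,
    invGen_last, invGen_castSucc hj]
  rw [add_pow_char_pow, eps_pow_two_pow_eq_zero (by omega), mul_pow, ← pow_mul]
  linear_combination eps n k 1 * hexp₁ +
    (eps n k 0 ^ ((2 * (j : ℕ) - 2) * N) * (eps n k 1 ^ N + eps n k 0 ^ (N - 1) * eps n k 1)) *
      CharTwo.two_eq_zero (R := P n k)

theorem relIdealC_le_ker_aeval_invGen (hk : ShiftBound n k) :
    relIdealC n n k ≤ RingHom.ker (aeval (R := ZMod 2) (invGen n k)) := by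
  have hn := Nat.AtLeastTwo.prop (n := n)
  have ht : eps n k 0 ^ n = 0 := eps_zero_pow_eq_zero_iff.2 le_rfl
  have hexp : eps n k 0 ^ (2 ^ k 2 - n) * eps n k 0 ^ (n - 1) = eps n k 0 ^ (2 ^ k 2 - 1) := by
    rw [← pow_add]
    congr 1
    have := hk.le_two_pow
    omega
  have ht' : eps n k 0 * eps n k 0 ^ (n - 1) = 0 := by
    rw [← pow_succ', Nat.sub_add_cancel (by omega), ht]
  have htt : eps n k 0 ^ (n - 1) * eps n k 0 ^ (n - 1) = 0 := by
    rw [← pow_add, eps_zero_pow_eq_zero_iff]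
    omega
  simp only [relIdealC_le_iff, RingHom.mem_ker, map_add, map_mul, map_pow, aeval_X, invGen_zero,
    invGen_last, aeval_invGen_sumTermC, eps_one_pow_two_pow_eq_zero]
  refine ⟨ht, ?_, ?_, ?_, aeval_invGen_hrelC hk⟩
  · linear_combination eps n k 1 * ht'
  · linear_combination eps n k 1 ^ 2 * htt
  · linear_combination eps n k 1 * hexp +
      eps n k 0 ^ (2 ^ k 2 - 1) * eps n k 1 * CharTwo.two_eq_zero (R := P n k)

end Invariants

section Presentation

variable {n : ℕ} {k : ℕ → ℕ}

/-- The exponent below which the generator of index `c` occurs in the normal form of an element of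
`𝔽₂[e₁, …, e_s, x]/(e₁ⁿ, e₁x, x², h₂, …, h_s)` modulo `(e₁, x)`; it is `2 ^ (k₂ - 1)` for `e₂`,
the exponent left by `h₂` modulo `(e₁, x)`. -/
def normalBound (n : ℕ) (k : ℕ → ℕ) : Fin (n / 2 + 2) → ℕ :=
  Fin.snoc (α := fun _ => ℕ)
    (fun i => if (i : ℕ) = 0 then 1 else if (i : ℕ) = 1 then 2 ^ (k 2 - 1) else 2 ^ k (i + 1)) 1

theorem normalBound_castSucc (i : Fin (n / 2 + 1)) : normalBound n k i.castSucc =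
    if (i : ℕ) = 0 then 1 else if (i : ℕ) = 1 then 2 ^ (k 2 - 1) else 2 ^ k (i + 1) :=
  Fin.snoc_castSucc (α := fun _ => ℕ) ..

theorem normalBound_last : normalBound n k (Fin.last _) = 1 :=
  Fin.snoc_last (α := fun _ => ℕ) ..

theorem X_zero_dvd_sumTermC_succ_sub (n K : ℕ) :
    X 0 ∣ sumTermC n (K + 1) - X 1 ^ 2 ^ K := by
  rw [sumTermC, Finset.sum_range_succ, Nat.sub_self, pow_zero, one_mul, add_sub_cancel_right]
  refine Finset.dvd_sum fun j hj => Dvd.dvd.mul_right (dvd_pow_self _ ?_) _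
  have := Nat.pow_lt_pow_right one_lt_two (Nat.succ_lt_succ (Finset.mem_range.1 hj))
  omega

variable [n.AtLeastTwo]

theorem ShiftBound.one_le (hk : ShiftBound n k) : 1 ≤ k 2 := by
  have := Nat.AtLeastTwo.prop (n := n)
  refine Nat.one_le_iff_ne_zero.2 fun h => ?_
  have := hk.le_two_pow
  rw [h] at this
  omega

theorem ShiftBound.finrank_eq (hk : ShiftBound n k) :
    Module.finrank (ZMod 2) (P n k) = n * 2 * ∏ c, normalBound n k c := by
  have hfactor (i : Fin (n / 2 + 1)) : (if (i : ℕ) = 0 then n else 2 ^ k ((i : ℕ) + 1)) =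
      (if i = 0 then n else 1) * (if i = 1 then 2 else 1) * normalBound n k i.castSucc := by
    have hpow : 2 ^ k 2 = 2 * 2 ^ (k 2 - 1) := by
      rw [← pow_succ', Nat.sub_add_cancel hk.one_le]
    simp only [normalBound_castSucc, Fin.ext_iff, Fin.val_zero, val_one_fin_div_two]
    split_ifs <;> simp_all
  rw [finrank_P, Finset.prod_congr rfl fun i _ => hfactor i, Finset.prod_mul_distrib,
    Finset.prod_mul_distrib, Finset.prod_ite_eq', Finset.prod_ite_eq',
    Fin.prod_univ_castSucc (normalBound n k), normalBound_last]
  simp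

theorem X_pow_normalBound_mem (hk : ShiftBound n k) (c : Fin (n / 2 + 2)) :
    (X c ^ normalBound n k c : MvPolynomial (Fin (n / 2 + 2)) (ZMod 2)) ∈
      Ideal.span {X 0, X (Fin.last _)} ⊔ relIdealC n n k := by
  obtain ⟨-, -, -, h₂, hrel⟩ := relIdealC_le_iff.1 (le_refl (relIdealC n n k))
  set J := Ideal.span {X 0, X (Fin.last _)} ⊔ relIdealC n n k
  have hX0 : X 0 ∈ J := Ideal.mem_sup_left (Ideal.subset_span (by simp))
  have hXlast : X (Fin.last _) ∈ J := Ideal.mem_sup_left (Ideal.subset_span (by simp))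
  induction c using Fin.lastCases with
  | last => simpa [normalBound_last] using hXlast
  | cast i =>
    rw [normalBound_castSucc]
    split_ifs with h0 h1
    · obtain rfl : i = 0 := Fin.ext h0
      simpa using hX0
    · have hi : i.castSucc = 1 := Fin.ext h1
      have hsum : sumTermC n (k 2) ∈ J :=
        (J.add_mem_iff_right (J.mul_mem_left _ hXlast)).1 (Ideal.mem_sup_right h₂)
      have hdvd := X_zero_dvd_sumTermC_succ_sub n (k 2 - 1)
      rw [Nat.sub_add_cancel hk.one_le] at hdvd
      rw [hi]
      exact (J.sub_mem_iff_right hsum).1 (J.mem_of_dvd hdvd hX0)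
    · have hexp : (2 * (i : ℕ) - 2) * 2 ^ k (i + 1) ≠ 0 :=
        mul_ne_zero (by omega) (Nat.two_pow_pos _).ne'
      have hi := hrel (i + 1)
      rw [hrelC_castSucc (by omega)] at hi
      refine (J.add_mem_iff_left (J.mul_mem_left _ hXlast)).1
        ((J.add_mem_iff_left (J.mul_mem_right _ (J.pow_mem_of_mem hX0 _ hexp.bot_lt))).1
          (Ideal.mem_sup_right hi))

/-- The normal forms modulo `(e₁, x)` in `𝔽₂[e₁, …, e_s, x]/(e₁ⁿ, e₁x, x², h₂, …, h_s)`. -/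
noncomputable def normalMonomial (n : ℕ) (k : ℕ → ℕ) (β : ∀ c, Fin (normalBound n k c)) :
    MvPolynomial (Fin (n / 2 + 2)) (ZMod 2) ⧸ relIdealC n n k :=
  ∏ c, Ideal.Quotient.mk _ (X c) ^ (β c : ℕ)

theorem span_powMul_normalMonomial_eq_top (hk : ShiftBound n k) :
    Submodule.span (ZMod 2) (Set.range (Sum.elim
      (powMul (Ideal.Quotient.mk (relIdealC n n k) (X 0)) n (normalMonomial n k))
      fun β => Ideal.Quotient.mk (relIdealC n n k) (X (Fin.last _)) * normalMonomial n k β)) =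
        ⊤ := by
  obtain ⟨ht, htx, hx, -⟩ := relIdealC_le_iff.1 (le_refl (relIdealC n n k))
  refine span_powMul_mul_eq_top ?_ ?_ ?_
    (span_prod_pow_sup_restrictScalars_eq_top (adjoin_range_mk_X _) fun c => ?_)
  · rwa [← map_pow, Ideal.Quotient.eq_zero_iff_mem]
  · rwa [← map_mul, Ideal.Quotient.eq_zero_iff_mem]
  · rwa [← map_pow, Ideal.Quotient.eq_zero_iff_mem]
  · have := Ideal.mem_map_of_mem (Ideal.Quotient.mk (relIdealC n n k)) (X_pow_normalBound_mem hk c)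
    rwa [Ideal.map_sup, Ideal.map_quotient_self, sup_bot_eq, Ideal.map_span, Set.image_pair,
      map_pow] at this

/-- The homomorphism of the presentation, `e₁, …, e_s, x ↦ invGen`, for `m = n`. -/
noncomputable def presHom (hk : ShiftBound n k) :
    (MvPolynomial (Fin (n / 2 + 2)) (ZMod 2) ⧸ relIdealC n n k) →ₐ[ZMod 2] P n k :=
  Ideal.Quotient.liftₐ _ (aeval (invGen n k)) (relIdealC_le_ker_aeval_invGen hk)

theorem presHom_mk (hk : ShiftBound n k) (f : MvPolynomial (Fin (n / 2 + 2)) (ZMod 2)) :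
    presHom hk (Ideal.Quotient.mk _ f) = aeval (invGen n k) f :=
  rfl

theorem presHom_mk_X (hk : ShiftBound n k) (c : Fin (n / 2 + 2)) :
    presHom hk (Ideal.Quotient.mk _ (X c)) = invGen n k c :=
  aeval_X _ _

theorem adjoin_insert_range_presHom (hk : ShiftBound n k) :
    Algebra.adjoin (ZMod 2) (insert (eps n k 1) ((presHom hk).range : Set (P n k))) = ⊤ := by
  set B := Algebra.adjoin (ZMod 2) (insert (eps n k 1) ((presHom hk).range : Set (P n k)))
  have hy : eps n k 1 ∈ B := Algebra.subset_adjoin (Set.mem_insert _ _)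
  have hgen (c) : invGen n k c ∈ B :=
    Algebra.subset_adjoin (Set.mem_insert_of_mem _ ⟨_, presHom_mk_X hk c⟩)
  have ht : eps n k 0 ∈ B := invGen_zero (n := n) (k := k) ▸ hgen 0
  rw [eq_top_iff, ← adjoin_range_eps, Algebra.adjoin_le_iff]
  rintro _ ⟨i, rfl⟩
  by_cases hi : 2 ≤ (i : ℕ)
  · have := sub_mem (hgen i.castSucc) (mul_mem (pow_mem ht (2 * (i : ℕ) - 2)) hy)
    rwa [invGen_castSucc hi, add_sub_cancel_right] at this
  · obtain rfl | rfl : i = 0 ∨ i = 1 := by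
      simp only [Fin.ext_iff, val_one_fin_div_two, Fin.val_zero]
      omega
    exacts [ht, hy]

theorem presHom_mk_X_last (hk : ShiftBound n k) :
    presHom hk (Ideal.Quotient.mk _ (X (Fin.last _))) =
      presHom hk (Ideal.Quotient.mk _ (X 0)) ^ (n - 1) * eps n k 1 := by
  rw [presHom_mk_X, presHom_mk_X, invGen_last, invGen_zero]

/-- The monomials `ε̄₁ᵃ m_β` and `ε̄₂ ε̄₁ᵃ m_β`, where `m_β` are the images of the normal forms. -/
noncomputable def normalFamily (hk : ShiftBound n k) :
    (Fin n × ∀ c, Fin (normalBound n k c)) ⊕ (Fin n × ∀ c, Fin (normalBound n k c)) → P n k :=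
  Sum.elim
    (powMul (presHom hk (Ideal.Quotient.mk _ (X 0))) n (presHom hk ∘ normalMonomial n k))
    fun a => eps n k 1 *
      powMul (presHom hk (Ideal.Quotient.mk _ (X 0))) n (presHom hk ∘ normalMonomial n k) a

theorem span_normalFamily_eq_top (hk : ShiftBound n k) :
    Submodule.span (ZMod 2) (Set.range (normalFamily hk)) = ⊤ := by
  obtain ⟨ht, -⟩ := relIdealC_le_iff.1 (le_refl (relIdealC n n k))
  refine span_powMul_sumElim_mul_eq_top
    (by rwa [← map_pow, Ideal.Quotient.eq_zero_iff_mem]) (span_powMul_normalMonomial_eq_top hk)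
    (presHom_mk_X_last hk) (adjoin_insert_range_presHom hk)
    (u := Ideal.Quotient.mk _ (X 1)) (v := -Ideal.Quotient.mk _ (X 0)) ?_
  rw [map_neg, presHom_mk_X, presHom_mk_X, invGen_zero, invGen_one]
  ring

theorem linearIndependent_normalFamily (hk : ShiftBound n k) :
    LinearIndependent (ZMod 2) (normalFamily hk) := by
  classical
  refine linearIndependent_of_top_le_span_of_card_eq_finrank (span_normalFamily_eq_top hk).ge ?_
  rw [hk.finrank_eq]
  simp only [Fintype.card_sum, Fintype.card_prod, Fintype.card_fin, Fintype.card_pi]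
  ring

theorem injective_presHom (hk : ShiftBound n k) : Function.Injective (presHom hk) := by
  obtain ⟨ht, -⟩ := relIdealC_le_iff.1 (le_refl (relIdealC n n k))
  exact injective_of_linearIndependent_powMul
    (by rwa [← map_pow, Ideal.Quotient.eq_zero_iff_mem]) (span_powMul_normalMonomial_eq_top hk)
    (presHom_mk_X_last hk) (linearIndependent_normalFamily hk)

end Presentation

section FixedAlgebra

/-- The defining property of the involution `τ` of `P`. The variable of index `i` is `ε_{i+1}`,
whence the exponent `2 * i - 1 = 2 * (i + 1) - 3`. -/
structure IsShift {n : ℕ} {k : ℕ → ℕ} (τ : P n k →ₐ[ZMod 2] P n k) : Prop where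
  map_eps_zero : τ (eps n k 0) = eps n k 0
  map_eps (i : Fin (n / 2 + 1)) (hi : 1 ≤ (i : ℕ)) :
    τ (eps n k i) = eps n k i + eps n k 0 ^ (2 * (i : ℕ) - 1)

variable {n : ℕ} {k : ℕ → ℕ} [n.AtLeastTwo] {τ : P n k →ₐ[ZMod 2] P n k}

theorem IsShift.shiftBound (hτ : IsShift τ) : ShiftBound n k := by
  intro i hi his
  obtain ⟨j, rfl⟩ : ∃ j : Fin (n / 2 + 1), i = j + 1 :=
    ⟨⟨i - 1, by omega⟩, (Nat.sub_add_cancel (by omega)).symm⟩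
  rw [show 2 * ((j : ℕ) + 1) - 3 = 2 * j - 1 by omega]
  exact le_mul_two_pow_of_algHom (by omega) (hτ.map_eps j (by omega))

theorem IsShift.map_eps_one (hτ : IsShift τ) : τ (eps n k 1) = eps n k 1 + eps n k 0 := by
  have h := hτ.map_eps 1 val_one_fin_div_two.ge
  rwa [val_one_fin_div_two, mul_one, pow_one] at h

theorem IsShift.map_invGen (hτ : IsShift τ) (c : Fin (n / 2 + 2)) :
    τ (invGen n k c) = invGen n k c := by
  have hτ0 := hτ.map_eps_zero
  have hτ1 := hτ.map_eps_one
  have hn := Nat.AtLeastTwo.prop (n := n)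
  have ht : eps n k 0 ^ (n - 1) * eps n k 0 = 0 := by
    rw [← pow_succ, Nat.sub_add_cancel (by omega), eps_zero_pow_eq_zero_iff]
  have h2 := CharTwo.two_eq_zero (R := P n k)
  induction c using Fin.lastCases with
  | last =>
    simp only [invGen_last, map_mul, map_pow, hτ0, hτ1]
    linear_combination ht
  | cast i =>
    obtain rfl | hi | hi : i = 0 ∨ i = 1 ∨ 2 ≤ (i : ℕ) := by
      simp only [Fin.ext_iff, val_one_fin_div_two, Fin.val_zero]
      omega
    · exact (congrArg τ invGen_zero).trans (hτ0.trans invGen_zero.symm)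
    · have : i.castSucc = 1 := Fin.ext (by rw [hi]; exact val_one_fin_div_two)
      simp only [this, invGen_one, map_add, map_mul, map_pow, hτ0, hτ1]
      linear_combination (eps n k 0 * eps n k 1 + eps n k 0 ^ 2) * h2
    · have hpow : eps n k 0 ^ (2 * (i : ℕ) - 1) =
          eps n k 0 ^ (2 * (i : ℕ) - 2) * eps n k 0 := by
        rw [← pow_succ]
        congr 1
        omega
      simp only [invGen_castSucc hi, map_add, map_mul, map_pow, hτ0, hτ1, hτ.map_eps i (by omega)]
      linear_combination hpow + eps n k 0 ^ (2 * (i : ℕ) - 2) * eps n k 0 * h2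

theorem IsShift.range_presHom (hτ : IsShift τ) :
    (presHom hτ.shiftBound).range = Pfix n k τ := by
  have hk := hτ.shiftBound
  obtain ⟨ht, -⟩ := relIdealC_le_iff.1 (le_refl (relIdealC n n k))
  refine range_eq_equalizer_of_linearIndependent_powMul
    (by rwa [← map_pow, Ideal.Quotient.eq_zero_iff_mem]) (presHom_mk_X_last hk)
    (linearIndependent_normalFamily hk) (span_normalFamily_eq_top hk) ?_ ?_
  · refine Ideal.Quotient.algHom_ext _ (MvPolynomial.algHom_ext fun c => ?_)
    exact (congrArg τ (presHom_mk_X hk c)).trans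
      ((hτ.map_invGen c).trans (presHom_mk_X hk c).symm)
  · rw [presHom_mk_X, invGen_zero, hτ.map_eps_one]

theorem IsShift.exists_surjective_algHom_Pfix (hτ : IsShift τ) :
    ∃ ψ : MvPolynomial (Fin (n / 2 + 2)) (ZMod 2) →ₐ[ZMod 2] Pfix n k τ,
      Function.Surjective ψ ∧ RingHom.ker ψ = relIdealC n n k ∧
        ∀ c, (ψ (X c) : P n k) = invGen n k c := by
  have hk := hτ.shiftBound
  have hrange := hτ.range_presHom
  refine ⟨(aeval (invGen n k)).codRestrict (Pfix n k τ) fun f => ?_, fun w => ?_, ?_, fun c => ?_⟩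
  · exact hrange.le ⟨Ideal.Quotient.mk _ f, presHom_mk hk f⟩
  · obtain ⟨p, hp⟩ := hrange.ge w.2
    obtain ⟨f, rfl⟩ := Ideal.Quotient.mk_surjective p
    exact ⟨f, Subtype.ext hp⟩
  · ext f
    rw [RingHom.mem_ker, ← Ideal.Quotient.eq_zero_iff_mem,
      ← map_eq_zero_iff _ (injective_presHom hk), presHom_mk, Subtype.ext_iff]
    rfl
  · exact aeval_X _ _

end FixedAlgebra

theorem invariant_subalgebra_quotient_presentation_general
    (n : ℕ) (hn : 2 ≤ n) (k : ℕ → ℕ)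
    (τ : P n k →ₐ[ZMod 2] P n k)
    (hτ0 : τ (eps n k 0) = eps n k 0)
    (hτ : ∀ i : Fin (n / 2 + 1), 1 ≤ (i : ℕ) →
      τ (eps n k i) = eps n k i + eps n k 0 ^ (2 * (i : ℕ) - 1))
    (m : ℕ) (hmn : m ≤ n) :
    ∀ e1 : Pfix n k τ, (e1 : P n k) = eps n k 0 →
    ∃ iso : (MvPolynomial (Fin (n / 2 + 2)) (ZMod 2) ⧸ relIdealC n m k) ≃ₐ[ZMod 2]
        (Pfix n k τ ⧸ (Ideal.span {e1 ^ m} : Ideal (Pfix n k τ))),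
      (iso (Ideal.Quotient.mk (relIdealC n m k) (X 0)) =
        Ideal.Quotient.mk (Ideal.span {e1 ^ m}) e1) ∧
      (∀ u : Pfix n k τ, (u : P n k) = eps n k 1 ^ 2 + eps n k 0 * eps n k 1 →
        iso (Ideal.Quotient.mk (relIdealC n m k) (X 1)) =
          Ideal.Quotient.mk (Ideal.span {e1 ^ m}) u) ∧
      (∀ c : Fin (n / 2 + 2), 2 ≤ (c : ℕ) → (hc : (c : ℕ) ≤ n / 2) →
        ∀ u : Pfix n k τ,
          (u : P n k) = eps n k ⟨c, Nat.lt_succ_of_le hc⟩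
              + eps n k 0 ^ (2 * (c : ℕ) - 2) * eps n k 1 →
          iso (Ideal.Quotient.mk (relIdealC n m k) (X c)) =
            Ideal.Quotient.mk (Ideal.span {e1 ^ m}) u) ∧
      (∀ u : Pfix n k τ, (u : P n k) = eps n k 0 ^ (n - 1) * eps n k 1 →
        iso (Ideal.Quotient.mk (relIdealC n m k) (X (Fin.last _))) =
          Ideal.Quotient.mk (Ideal.span {e1 ^ m}) u) := by
  intro e1 he1
  have : n.AtLeastTwo := ⟨hn⟩
  obtain ⟨ψ, hψ, hker, hψX⟩ := IsShift.exists_surjective_algHom_Pfix ⟨hτ0, hτ⟩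
  have hψe1 : ψ (X 0) = e1 := Subtype.ext ((hψX 0).trans (invGen_zero.trans he1.symm))
  have hcomap : relIdealC n m k = (Ideal.span {e1 ^ m}).comap ψ := by
    have hmap : Ideal.span {e1 ^ m} = (Ideal.span {X 0 ^ m}).map ψ := by
      rw [Ideal.map_span, Set.image_singleton, map_pow, hψe1]
    rw [hmap, Ideal.comap_map_of_surjective' ψ hψ, hker, relIdealC_eq_sup hmn]
  obtain ⟨iso, hiso⟩ := exists_algEquiv_quotient_of_surjective hψ hcomap
  have hisoX (c) (u : Pfix n k τ) (hu : (u : P n k) = invGen n k c) :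
      iso (Ideal.Quotient.mk _ (X c)) = Ideal.Quotient.mk _ u := by
    rw [hiso, Subtype.ext ((hψX c).trans hu.symm)]
  refine ⟨iso, hisoX 0 e1 (he1.trans invGen_zero.symm), fun u hu => ?_, fun c hc hc' u hu => ?_,
    fun u hu => ?_⟩
  · exact hisoX 1 u (hu.trans invGen_one.symm)
  · exact hisoX c u
      (hu.trans (invGen_castSucc (i := ⟨c, Nat.lt_succ_of_le hc'⟩) hc).symm)
  · exact hisoX (Fin.last _) u (hu.trans invGen_last.symm)

/-- Fix `n ≥ 2`, `s = n/2 + 1`, `k i` as in the context, the algebra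
`P = 𝔽₂[ε₁,…,ε_s]/(ε₁ⁿ, ε₂^{2^{k₂}}, …, ε_s^{2^{k_s}})` and the involution `τ` with
`τ(ε̄₁) = ε̄₁`, `τ(ε̄ᵢ) = ε̄ᵢ + ε̄₁^{2i−3}`; `Pfix n k τ` is the invariant subalgebra `P^τ`.
For every `1 ≤ m ≤ n` there is an isomorphism of `𝔽₂`-algebras
`𝔽₂[e₁,…,e_s,x]/(e₁^m, e₁·x, x², h₂, h₃, …, h_s) ≅ P^τ/(ε̄₁^m)` sending `e₁ ↦ ε̄₁`,
`e₂ ↦ ε̄₂² + ε̄₁ε̄₂`, `e_i ↦ ε̄_i + ε̄₁^{2i−4}ε̄₂` (`3 ≤ i ≤ s`), and `x ↦ ε̄₁^{n−1}ε̄₂`.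
Here `e1 : P^τ` denotes the element with underlying value `ε̄₁`. -/
theorem invariant_subalgebra_quotient_presentation
    (n : ℕ) (hn : 2 ≤ n) (k : ℕ → ℕ)
    (hk : ∀ i : ℕ, 2 ≤ i → i ≤ n / 2 + 1 →
      (2 * i - 3) * 2 ^ k i ≤ 2 * n - 1 ∧ 2 * n - 1 < (2 * i - 3) * 2 ^ (k i + 1))
    (τ : P n k →ₐ[ZMod 2] P n k)
    (hτ0 : τ (eps n k 0) = eps n k 0)
    (hτ : ∀ i : Fin (n / 2 + 1), 1 ≤ (i : ℕ) →
      τ (eps n k i) = eps n k i + eps n k 0 ^ (2 * (i : ℕ) - 1))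
    (m : ℕ) (hm1 : 1 ≤ m) (hmn : m ≤ n) :
    ∀ e1 : Pfix n k τ, (e1 : P n k) = eps n k 0 →
    ∃ iso : (MvPolynomial (Fin (n / 2 + 2)) (ZMod 2) ⧸ relIdealC n m k) ≃ₐ[ZMod 2]
        (Pfix n k τ ⧸ (Ideal.span {e1 ^ m} : Ideal (Pfix n k τ))),
      (iso (Ideal.Quotient.mk (relIdealC n m k) (X 0)) =
        Ideal.Quotient.mk (Ideal.span {e1 ^ m}) e1) ∧
      (∀ u : Pfix n k τ, (u : P n k) = eps n k 1 ^ 2 + eps n k 0 * eps n k 1 →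
        iso (Ideal.Quotient.mk (relIdealC n m k) (X 1)) =
          Ideal.Quotient.mk (Ideal.span {e1 ^ m}) u) ∧
      (∀ c : Fin (n / 2 + 2), 2 ≤ (c : ℕ) → (hc : (c : ℕ) ≤ n / 2) →
        ∀ u : Pfix n k τ,
          (u : P n k) = eps n k ⟨(c : ℕ), by omega⟩
              + eps n k 0 ^ (2 * (c : ℕ) - 2) * eps n k 1 →
          iso (Ideal.Quotient.mk (relIdealC n m k) (X c)) =
            Ideal.Quotient.mk (Ideal.span {e1 ^ m}) u) ∧
      (∀ u : Pfix n k τ, (u : P n k) = eps n k 0 ^ (n - 1) * eps n k 1 →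
        iso (Ideal.Quotient.mk (relIdealC n m k) (X ⟨n / 2 + 1, by omega⟩)) =
          Ideal.Quotient.mk (Ideal.span {e1 ^ m}) u) :=
  invariant_subalgebra_quotient_presentation_general n hn k τ hτ0 hτ m hmn
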